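/- There exists an absolute constant c₀ > 0 with the following property: for every n ≥ 1, every a > 0 and every smooth compactly supported function u : ℝⁿ × (0,2) → ℝ, one has ∫₀²∫_{ℝⁿ} h(t)^{−2a} e^{−|x|²/(4t)} ( (a/t)·u(x,t)² + |∇u(x,t)|² ) dx dt ≤ c₀ ∫₀²∫_{ℝⁿ} h(t)^{−2a} e^{−|x|²/(4t)} |∂ₜu(x,t) + Δu(x,t)|² dx dt. -/

import Mathlib

open Real Set Filter MeasureTheory

/-- The Laplacian of `f` at `x`, computed as the sum of the second partial
derivatives in the coordinate directions. -/
noncomputable def lap {n : ℕ} (f : EuclideanSpace ℝ (Fin n) → ℝ)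
    (x : EuclideanSpace ℝ (Fin n)) : ℝ :=
  ∑ i, fderiv ℝ (fun y => fderiv ℝ f y (EuclideanSpace.single i 1)) x
      (EuclideanSpace.single i 1)

/-- The weight `h(t) = t e^{(1-t)/3}`. -/
noncomputable def hfun (t : ℝ) : ℝ := t * Real.exp ((1 - t) / 3)

/-- The coordinate direction `i` of the spatial factor of space-time. -/
noncomputable def spaceDir {n : ℕ} (i : Fin n) : EuclideanSpace ℝ (Fin n) × ℝ :=
  (EuclideanSpace.single i 1, 0)

/-- The time direction of space-time. -/
noncomputable def timeDir (n : ℕ) : EuclideanSpace ℝ (Fin n) × ℝ := (0, 1)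

/-- The generator `(x/2, t)` of the parabolic dilations at `(x, t)`. -/
noncomputable def dilDir {n : ℕ} (p : EuclideanSpace ℝ (Fin n) × ℝ) :
    EuclideanSpace ℝ (Fin n) × ℝ :=
  ((1 / 2 : ℝ) • p.1, p.2)

/-- The weight `h(t)^{-2b} e^{-|x|²/4t}`, written as an exponential. -/
noncomputable def carlemanWeight {n : ℕ} (b : ℝ) (p : EuclideanSpace ℝ (Fin n) × ℝ) : ℝ :=
  Real.exp (-(2 * b) * (Real.log p.2 + (1 - p.2) / 3) - ‖p.1‖ ^ 2 / (4 * p.2))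

/-- The squared norm of the spatial gradient. -/
noncomputable def gradSq {n : ℕ} (U : EuclideanSpace ℝ (Fin n) × ℝ → ℝ)
    (p : EuclideanSpace ℝ (Fin n) × ℝ) : ℝ :=
  ∑ i, (fderiv ℝ U p (spaceDir i)) ^ 2

/-- The spatial Laplacian on space-time. -/
noncomputable def spaceLap {n : ℕ} (U : EuclideanSpace ℝ (Fin n) × ℝ → ℝ)
    (p : EuclideanSpace ℝ (Fin n) × ℝ) : ℝ :=
  ∑ i, fderiv ℝ (fun q => fderiv ℝ U q (spaceDir i)) p (spaceDir i)

theorem dilDir_eq_sum {n : ℕ} (p : EuclideanSpace ℝ (Fin n) × ℝ) :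
    dilDir p = ∑ i, (p.1 i / 2) • spaceDir i + p.2 • timeDir n := by
  have h : p.1 = ∑ i, p.1 i • EuclideanSpace.single i (1 : ℝ) := by
    conv_lhs => rw [← (EuclideanSpace.basisFun (Fin n) ℝ).sum_repr p.1]
    simp
  refine Prod.ext ?_ ?_
  · simp only [dilDir, spaceDir, timeDir, Prod.fst_add, Prod.fst_sum, Prod.smul_mk, smul_zero,
      add_zero]
    conv_lhs => rw [h, Finset.smul_sum]
    exact Finset.sum_congr rfl fun i _ => by rw [smul_smul]; congr 1; ring
  · simp [dilDir, spaceDir, timeDir, Prod.snd_sum]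

theorem map_dilDir {n : ℕ} (L : EuclideanSpace ℝ (Fin n) × ℝ →L[ℝ] ℝ)
    (p : EuclideanSpace ℝ (Fin n) × ℝ) :
    L (dilDir p) = ∑ i, p.1 i / 2 * L (spaceDir i) + p.2 * L (timeDir n) := by
  rw [dilDir_eq_sum]
  simp

theorem contDiffAt_carlemanWeight {n : ℕ} (b : ℝ) {p : EuclideanSpace ℝ (Fin n) × ℝ}
    (hp : 0 < p.2) {k : ℕ∞} : ContDiffAt ℝ k (carlemanWeight (n := n) b) p := by
  unfold carlemanWeight
  refine ContDiffAt.exp (ContDiffAt.sub (contDiffAt_const.mul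
    ((contDiffAt_snd.log hp.ne').add ((contDiffAt_const.sub contDiffAt_snd).div_const _)))
    (ContDiffAt.div (contDiffAt_fst.norm_sq ℝ) (contDiffAt_const.mul contDiffAt_snd) ?_))
  positivity

theorem fderiv_carlemanWeight {n : ℕ} (b : ℝ) {p : EuclideanSpace ℝ (Fin n) × ℝ}
    (hp : 0 < p.2) (v : EuclideanSpace ℝ (Fin n) × ℝ) :
    fderiv ℝ (carlemanWeight (n := n) b) p v =
      carlemanWeight b p * (-(inner ℝ p.1 v.1) / (2 * p.2) +
        (‖p.1‖ ^ 2 / (4 * p.2 ^ 2) - 2 * b * (1 / p.2 - 1 / 3)) * v.2) := by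
  have h1 : HasFDerivAt (fun q : EuclideanSpace ℝ (Fin n) × ℝ => q.1)
    (ContinuousLinearMap.fst ℝ _ _) p := hasFDerivAt_fst
  have h2 : HasFDerivAt (fun q : EuclideanSpace ℝ (Fin n) × ℝ => q.2)
    (ContinuousLinearMap.snd ℝ _ _) p := hasFDerivAt_snd
  have hinv := (hasDerivAt_inv (x := 4 * p.2) (by positivity)).comp_hasFDerivAt p
    (h2.const_mul 4)
  have h := ((((h2.log hp.ne').add ((h2.const_sub 1).mul_const (3⁻¹ : ℝ))).const_mul
    (-(2 * b))).sub (h1.norm_sq.mul hinv)).exp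
  have he : carlemanWeight (n := n) b = fun q => Real.exp (-(2 * b) *
    (Real.log q.2 + (1 - q.2) * 3⁻¹) - ‖q.1‖ ^ 2 * (4 * q.2)⁻¹) := by
    funext q; simp only [carlemanWeight, div_eq_mul_inv]
  rw [he]
  have h' := h.fderiv
  simp only [Function.comp_def, Pi.add_def, Pi.sub_def, Pi.mul_def] at h'
  erw [h']
  simp
  field_simp
  ring

theorem inner_spaceDir {n : ℕ} (x : EuclideanSpace ℝ (Fin n)) (i : Fin n) :
    inner ℝ x (spaceDir i).1 = x i := by
  simp [spaceDir, EuclideanSpace.inner_single_right]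

theorem fderiv_carlemanWeight_spaceDir {n : ℕ} (b : ℝ) {p : EuclideanSpace ℝ (Fin n) × ℝ}
    (hp : 0 < p.2) (i : Fin n) :
    fderiv ℝ (carlemanWeight (n := n) b) p (spaceDir i) =
      -(p.1 i / (2 * p.2)) * carlemanWeight b p := by
  rw [fderiv_carlemanWeight b hp, inner_spaceDir]
  simp [spaceDir]
  ring

theorem fderiv_carlemanWeight_dilDir {n : ℕ} (b : ℝ) {p : EuclideanSpace ℝ (Fin n) × ℝ}
    (hp : 0 < p.2) :
    fderiv ℝ (carlemanWeight (n := n) b) p (dilDir p) =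
      -(2 * b * (1 - p.2 / 3)) * carlemanWeight b p := by
  rw [fderiv_carlemanWeight b hp]
  simp only [dilDir, inner_smul_right, real_inner_self_eq_norm_sq]
  field_simp
  ring

theorem fderiv_carlemanWeight_timeDir {n : ℕ} (b : ℝ) {p : EuclideanSpace ℝ (Fin n) × ℝ}
    (hp : 0 < p.2) :
    fderiv ℝ (carlemanWeight (n := n) b) p (timeDir n) =
      (‖p.1‖ ^ 2 / (4 * p.2 ^ 2) - 2 * b * (1 / p.2 - 1 / 3)) * carlemanWeight b p := by
  rw [fderiv_carlemanWeight b hp]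
  simp [timeDir]
  ring

theorem integral_fderiv_apply_eq_zero {n : ℕ} {F : EuclideanSpace ℝ (Fin n) × ℝ → ℝ}
    (hF : ContDiff ℝ 1 F) (hc : HasCompactSupport F) (v : EuclideanSpace ℝ (Fin n) × ℝ) :
    Integrable (fun p => fderiv ℝ F p v) ∧ ∫ p, fderiv ℝ F p v = 0 := by
  have hi : Integrable (fun p => fderiv ℝ F p v) :=
    ((hF.continuous_fderiv one_ne_zero).clm_apply continuous_const).integrable_of_hasCompactSupport
      ((hc.fderiv_apply (𝕜 := ℝ) v))
  refine ⟨hi, ?_⟩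
  have : (volume : Measure (EuclideanSpace ℝ (Fin n) × ℝ)).IsAddHaarMeasure :=
    inferInstanceAs ((volume : Measure (EuclideanSpace ℝ (Fin n))).prod
      (volume : Measure ℝ)).IsAddHaarMeasure
  have h := integral_mul_fderiv_eq_neg_fderiv_mul_of_integrable
    (μ := (volume : Measure (EuclideanSpace ℝ (Fin n) × ℝ)))
    (f := fun _ => (1 : ℝ)) (g := F) (v := v) (by simp) (by simpa using hi)
    (by simpa using hF.continuous.integrable_of_hasCompactSupport hc)
    (fun x _ => differentiableAt_const _) (fun x _ => (hF.differentiable one_ne_zero) x)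
  simpa using h

/-- The zeroth order coefficient of the skew-symmetric part of the conjugated operator. -/
noncomputable def skewCoeff (n : ℕ) (b t : ℝ) : ℝ := n / 4 + 1 / 2 - b + b * t / 3

/-- The skew-symmetric part of the conjugated operator: the dilation derivative corrected by a
multiplication operator. -/
noncomputable def skewPart {n : ℕ} (b : ℝ) (U : EuclideanSpace ℝ (Fin n) × ℝ → ℝ)
    (p : EuclideanSpace ℝ (Fin n) × ℝ) : ℝ :=
  fderiv ℝ U p (dilDir p) + skewCoeff n b p.2 * U p

/-- The energy density transported by the dilation field. -/
noncomputable def dilEnergy {n : ℕ} (b : ℝ) (U : EuclideanSpace ℝ (Fin n) × ℝ → ℝ)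
    (p : EuclideanSpace ℝ (Fin n) × ℝ) : ℝ :=
  carlemanWeight b p * (p.2 * gradSq U p + skewCoeff n b p.2 * U p ^ 2)

/-- Spatial components of the flux in the commutator identity. -/
noncomputable def commFlux {n : ℕ} (b : ℝ) (U : EuclideanSpace ℝ (Fin n) × ℝ → ℝ) (i : Fin n)
    (p : EuclideanSpace ℝ (Fin n) × ℝ) : ℝ :=
  2 * p.2 * carlemanWeight b p * fderiv ℝ U p (spaceDir i) * skewPart b U p -
    p.1 i / 2 * dilEnergy b U p

/-- Time component of the flux in the commutator identity. -/
noncomputable def commFluxTime {n : ℕ} (b : ℝ) (U : EuclideanSpace ℝ (Fin n) × ℝ → ℝ)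
    (p : EuclideanSpace ℝ (Fin n) × ℝ) : ℝ :=
  -(p.2 * dilEnergy b U p)

/-- Spatial components of the flux in the energy identity. -/
noncomputable def energyFlux {n : ℕ} (b : ℝ) (U : EuclideanSpace ℝ (Fin n) × ℝ → ℝ) (i : Fin n)
    (p : EuclideanSpace ℝ (Fin n) × ℝ) : ℝ :=
  carlemanWeight b p * (p.2 ^ 2 * (U p * fderiv ℝ U p (spaceDir i)) +
    p.2 * p.1 i / 4 * U p ^ 2)

/-- Time component of the flux in the energy identity. -/
noncomputable def energyFluxTime {n : ℕ} (b : ℝ) (U : EuclideanSpace ℝ (Fin n) × ℝ → ℝ)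
    (p : EuclideanSpace ℝ (Fin n) × ℝ) : ℝ :=
  carlemanWeight b p * (p.2 ^ 2 / 2 * U p ^ 2)

section Derivatives

variable {n : ℕ} {b : ℝ} {U : EuclideanSpace ℝ (Fin n) × ℝ → ℝ}
  {p : EuclideanSpace ℝ (Fin n) × ℝ}

theorem contDiff_fderiv_apply_const (hU : ContDiff ℝ (⊤ : ℕ∞) U)
    (v : EuclideanSpace ℝ (Fin n) × ℝ) :
    ContDiff ℝ (⊤ : ℕ∞) (fun q => fderiv ℝ U q v) :=
  (hU.fderiv_right (m := (⊤ : ℕ∞)) (by simp)).clm_apply contDiff_const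

theorem contDiff_dilDir : ContDiff ℝ (⊤ : ℕ∞) (dilDir (n := n)) :=
  (contDiff_fst.const_smul (1 / 2 : ℝ)).prodMk contDiff_snd

theorem contDiff_fderiv_dilDir (hU : ContDiff ℝ (⊤ : ℕ∞) U) :
    ContDiff ℝ (⊤ : ℕ∞) (fun q => fderiv ℝ U q (dilDir q)) :=
  (hU.fderiv_right (m := (⊤ : ℕ∞)) (by simp)).clm_apply contDiff_dilDir

theorem contDiff_gradSq (hU : ContDiff ℝ (⊤ : ℕ∞) U) : ContDiff ℝ (⊤ : ℕ∞) (gradSq U) :=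
  ContDiff.sum fun _ _ => (contDiff_fderiv_apply_const hU _).pow 2

theorem contDiff_spaceLap (hU : ContDiff ℝ (⊤ : ℕ∞) U) : ContDiff ℝ (⊤ : ℕ∞) (spaceLap U) :=
  ContDiff.sum fun _ _ => contDiff_fderiv_apply_const (contDiff_fderiv_apply_const hU _) _

theorem contDiff_skewCoeff : ContDiff ℝ (⊤ : ℕ∞)
    (fun q : EuclideanSpace ℝ (Fin n) × ℝ => skewCoeff n b q.2) :=
  contDiff_const.add ((contDiff_const.mul contDiff_snd).div_const _)

theorem contDiff_skewPart (hU : ContDiff ℝ (⊤ : ℕ∞) U) : ContDiff ℝ (⊤ : ℕ∞) (skewPart b U) :=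
  (contDiff_fderiv_dilDir hU).add (contDiff_skewCoeff.mul hU)

theorem contDiff_coord (i : Fin n) :
    ContDiff ℝ (⊤ : ℕ∞) (fun q : EuclideanSpace ℝ (Fin n) × ℝ => q.1 i) :=
  ((EuclideanSpace.proj i : EuclideanSpace ℝ (Fin n) →L[ℝ] ℝ).comp
    (ContinuousLinearMap.fst ℝ _ ℝ)).contDiff

theorem contDiffAt_dilEnergy (hU : ContDiff ℝ (⊤ : ℕ∞) U) (hp : 0 < p.2) :
    ContDiffAt ℝ (⊤ : ℕ∞) (dilEnergy b U) p :=
  (contDiffAt_carlemanWeight b hp).mul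
    ((contDiff_snd.mul (contDiff_gradSq hU)).add (contDiff_skewCoeff.mul (hU.pow 2))).contDiffAt

theorem contDiffAt_commFlux (hU : ContDiff ℝ (⊤ : ℕ∞) U) (hp : 0 < p.2) (i : Fin n) :
    ContDiffAt ℝ (⊤ : ℕ∞) (commFlux b U i) p :=
  ((((contDiffAt_const.mul contDiffAt_snd).mul (contDiffAt_carlemanWeight b hp)).mul
    (contDiff_fderiv_apply_const hU _).contDiffAt).mul (contDiff_skewPart hU).contDiffAt).sub
    (((contDiff_coord i).contDiffAt.div_const _).mul (contDiffAt_dilEnergy hU hp))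

theorem contDiffAt_commFluxTime (hU : ContDiff ℝ (⊤ : ℕ∞) U) (hp : 0 < p.2) :
    ContDiffAt ℝ (⊤ : ℕ∞) (commFluxTime b U) p :=
  (contDiffAt_snd.mul (contDiffAt_dilEnergy hU hp)).neg

theorem contDiffAt_energyFlux (hU : ContDiff ℝ (⊤ : ℕ∞) U) (hp : 0 < p.2) (i : Fin n) :
    ContDiffAt ℝ (⊤ : ℕ∞) (energyFlux b U i) p :=
  (contDiffAt_carlemanWeight b hp).mul
    (((contDiff_snd.pow 2).mul (hU.mul (contDiff_fderiv_apply_const hU _))).add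
      (((contDiff_snd.mul (contDiff_coord i)).div_const _).mul (hU.pow 2))).contDiffAt

theorem contDiffAt_energyFluxTime (hU : ContDiff ℝ (⊤ : ℕ∞) U) (hp : 0 < p.2) :
    ContDiffAt ℝ (⊤ : ℕ∞) (energyFluxTime b U) p :=
  (contDiffAt_carlemanWeight b hp).mul
    (((contDiff_snd.pow 2).div_const _).mul (hU.pow 2)).contDiffAt

theorem hasFDerivAt_of_contDiffAt {f : EuclideanSpace ℝ (Fin n) × ℝ → ℝ}
    (hf : ContDiffAt ℝ (⊤ : ℕ∞) f p) : HasFDerivAt f (fderiv ℝ f p) p :=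
  (hf.differentiableAt (by simp)).hasFDerivAt

theorem fderiv_fderiv_comm (hU : ContDiff ℝ (⊤ : ℕ∞) U) (v w : EuclideanSpace ℝ (Fin n) × ℝ) :
    fderiv ℝ (fun q => fderiv ℝ U q v) p w = fderiv ℝ (fun q => fderiv ℝ U q w) p v := by
  have hd : DifferentiableAt ℝ (fderiv ℝ U) p :=
    (hU.fderiv_right (m := (⊤ : ℕ∞)) (by simp)).differentiable (by simp) p
  have hs : IsSymmSndFDerivAt ℝ U p :=
    hU.contDiffAt.isSymmSndFDerivAt (by simpa using WithTop.coe_le_coe.2 (le_top : (2 : ℕ∞) ≤ ⊤))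
  rw [fderiv_clm_apply hd (differentiableAt_const _), fderiv_clm_apply hd (differentiableAt_const _)]
  simpa using hs.eq w v

theorem fderiv_fderiv_dilDir_spaceDir (hU : ContDiff ℝ (⊤ : ℕ∞) U) (i : Fin n) :
    fderiv ℝ (fun q => fderiv ℝ U q (dilDir q)) p (spaceDir i) =
      fderiv ℝ (fun q => fderiv ℝ U q (spaceDir i)) p (dilDir p) +
        1 / 2 * fderiv ℝ U p (spaceDir i) := by
  have hd : DifferentiableAt ℝ (fderiv ℝ U) p :=
    (hU.fderiv_right (m := (⊤ : ℕ∞)) (by simp)).differentiable (by simp) p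
  have hs := fderiv_fderiv_comm (p := p) hU (spaceDir i) (dilDir p)
  have hD : HasFDerivAt (dilDir (n := n)) (((1 / 2 : ℝ) • ContinuousLinearMap.fst ℝ _ ℝ).prod
      (ContinuousLinearMap.snd ℝ _ ℝ)) p :=
    (hasFDerivAt_fst.const_smul (1 / 2 : ℝ)).prodMk hasFDerivAt_snd
  have hD' : fderiv ℝ (dilDir (n := n)) p (spaceDir i) = (1 / 2 : ℝ) • spaceDir i := by
    rw [hD.fderiv]
    simp [spaceDir]
  rw [hs, fderiv_clm_apply hd hD.differentiableAt, fderiv_clm_apply hd (differentiableAt_const _)]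
  simp [hD']
  ring

theorem hasFDerivAt_skewCoeff : HasFDerivAt
    (fun q : EuclideanSpace ℝ (Fin n) × ℝ => skewCoeff n b q.2)
    ((b / 3) • ContinuousLinearMap.snd ℝ (EuclideanSpace ℝ (Fin n)) ℝ) p := by
  have h : HasFDerivAt (fun q : EuclideanSpace ℝ (Fin n) × ℝ => q.2)
    (ContinuousLinearMap.snd ℝ _ _) p := hasFDerivAt_snd
  have h' := (h.const_mul (b / 3)).const_add (n / 4 + 1 / 2 - b)
  have he : (fun q : EuclideanSpace ℝ (Fin n) × ℝ => skewCoeff n b q.2) =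
      fun q => (n / 4 + 1 / 2 - b) + b / 3 * q.2 := by
    funext q
    simp only [skewCoeff]
    ring
  rw [he]
  exact h'

theorem fderiv_skewPart_spaceDir (hU : ContDiff ℝ (⊤ : ℕ∞) U) (i : Fin n) :
    fderiv ℝ (skewPart b U) p (spaceDir i) =
      fderiv ℝ (fun q => fderiv ℝ U q (spaceDir i)) p (dilDir p) +
        (1 / 2 + skewCoeff n b p.2) * fderiv ℝ U p (spaceDir i) := by
  have h := ((hasFDerivAt_of_contDiffAt (p := p) (contDiff_fderiv_dilDir hU).contDiffAt).add
    ((hasFDerivAt_skewCoeff (b := b)).mul (hasFDerivAt_of_contDiffAt hU.contDiffAt))).fderiv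
  change fderiv ℝ (skewPart b U) p = _ at h
  rw [h]
  simp only [add_apply, smul_apply,
    fderiv_fderiv_dilDir_spaceDir hU, smul_eq_mul, ContinuousLinearMap.coe_snd']
  simp [spaceDir]
  ring

theorem fderiv_gradSq (hU : ContDiff ℝ (⊤ : ℕ∞) U) (v : EuclideanSpace ℝ (Fin n) × ℝ) :
    fderiv ℝ (gradSq U) p v = ∑ i, 2 * (fderiv ℝ U p (spaceDir i) *
      fderiv ℝ (fun q => fderiv ℝ U q (spaceDir i)) p v) := by
  have h := (HasFDerivAt.fun_sum fun i (_ : i ∈ Finset.univ) =>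
    (hasFDerivAt_of_contDiffAt (p := p)
      (contDiff_fderiv_apply_const hU (spaceDir i)).contDiffAt).pow 2).fderiv
  change fderiv ℝ (gradSq U) p = _ at h
  rw [h]
  simp [mul_assoc]

theorem fderiv_dilEnergy_dilDir (hU : ContDiff ℝ (⊤ : ℕ∞) U) (hp : 0 < p.2) :
    fderiv ℝ (dilEnergy b U) p (dilDir p) =
      -(2 * b * (1 - p.2 / 3)) * dilEnergy b U p + carlemanWeight b p *
        (p.2 * gradSq U p + p.2 * ∑ i, 2 * (fderiv ℝ U p (spaceDir i) *
          fderiv ℝ (fun q => fderiv ℝ U q (spaceDir i)) p (dilDir p)) +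
          b * p.2 / 3 * U p ^ 2 + 2 * skewCoeff n b p.2 * U p * fderiv ℝ U p (dilDir p)) := by
  have h2 : HasFDerivAt (fun q : EuclideanSpace ℝ (Fin n) × ℝ => q.2)
    (ContinuousLinearMap.snd ℝ _ _) p := hasFDerivAt_snd
  have h := ((hasFDerivAt_of_contDiffAt (contDiffAt_carlemanWeight b hp)).mul
    ((h2.mul (hasFDerivAt_of_contDiffAt (contDiff_gradSq hU).contDiffAt)).add
      ((hasFDerivAt_skewCoeff (b := b)).mul ((hasFDerivAt_of_contDiffAt hU.contDiffAt).pow 2)))).fderiv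
  change fderiv ℝ (dilEnergy b U) p = _ at h
  rw [h]
  simp only [add_apply, smul_apply, smul_eq_mul,
    fderiv_carlemanWeight_dilDir b hp, fderiv_gradSq hU, ContinuousLinearMap.coe_snd', Pi.add_apply,
    Pi.mul_apply]
  have : (dilDir p).2 = p.2 := rfl
  rw [this]
  simp only [dilEnergy]
  norm_num
  ring

theorem fderiv_commFlux (hU : ContDiff ℝ (⊤ : ℕ∞) U) (hp : 0 < p.2) (i : Fin n) :
    fderiv ℝ (commFlux b U i) p (spaceDir i) =
      carlemanWeight b p * skewPart b U p * (2 * p.2 *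
        fderiv ℝ (fun q => fderiv ℝ U q (spaceDir i)) p (spaceDir i) -
          p.1 i * fderiv ℝ U p (spaceDir i)) +
      2 * p.2 * carlemanWeight b p * fderiv ℝ U p (spaceDir i) *
        fderiv ℝ (skewPart b U) p (spaceDir i) - dilEnergy b U p / 2 -
      p.1 i / 2 * fderiv ℝ (dilEnergy b U) p (spaceDir i) := by
  have h2 : HasFDerivAt (fun q : EuclideanSpace ℝ (Fin n) × ℝ => q.2)
    (ContinuousLinearMap.snd ℝ _ _) p := hasFDerivAt_snd
  have hx : HasFDerivAt (fun q : EuclideanSpace ℝ (Fin n) × ℝ => q.1 i)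
    ((EuclideanSpace.proj i : EuclideanSpace ℝ (Fin n) →L[ℝ] ℝ).comp
    (ContinuousLinearMap.fst ℝ _ ℝ)) p :=
    ((EuclideanSpace.proj i : EuclideanSpace ℝ (Fin n) →L[ℝ] ℝ).comp
      (ContinuousLinearMap.fst ℝ _ ℝ)).hasFDerivAt
  have h := (((((h2.const_mul 2).mul
    (hasFDerivAt_of_contDiffAt (contDiffAt_carlemanWeight b hp))).mul
    (hasFDerivAt_of_contDiffAt (contDiff_fderiv_apply_const hU (spaceDir i)).contDiffAt)).mul
    (hasFDerivAt_of_contDiffAt (contDiff_skewPart (b := b) hU).contDiffAt)).sub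
    ((hx.mul_const (2⁻¹ : ℝ)).mul
      (hasFDerivAt_of_contDiffAt (contDiffAt_dilEnergy (b := b) hU hp)))).fderiv
  have he : commFlux b U i = fun q => 2 * q.2 * carlemanWeight b q *
      fderiv ℝ U q (spaceDir i) * skewPart b U q - q.1 i * 2⁻¹ * dilEnergy b U q := by
    funext q; simp only [commFlux, div_eq_mul_inv]
  change fderiv ℝ (fun q => 2 * q.2 * carlemanWeight b q *
      fderiv ℝ U q (spaceDir i) * skewPart b U q - q.1 i * 2⁻¹ * dilEnergy b U q) p = _ at h
  rw [he, h]
  have hs : EuclideanSpace.proj (𝕜 := ℝ) i (spaceDir i).1 = (1 : ℝ) := by simp [spaceDir]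
  have hs' : (spaceDir i).2 = (0 : ℝ) := rfl
  simp only [add_apply, smul_apply, smul_eq_mul,
    fderiv_carlemanWeight_spaceDir b hp, ContinuousLinearMap.coe_snd', sub_apply,
    Pi.mul_apply, ContinuousLinearMap.comp_apply, ContinuousLinearMap.coe_fst',
    hs, hs']
  field_simp
  ring

theorem fderiv_commFluxTime (hU : ContDiff ℝ (⊤ : ℕ∞) U) (hp : 0 < p.2) :
    fderiv ℝ (commFluxTime b U) p (timeDir n) =
      -dilEnergy b U p - p.2 * fderiv ℝ (dilEnergy b U) p (timeDir n) := by
  have h2 : HasFDerivAt (fun q : EuclideanSpace ℝ (Fin n) × ℝ => q.2)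
    (ContinuousLinearMap.snd ℝ _ _) p := hasFDerivAt_snd
  have h := (h2.mul (hasFDerivAt_of_contDiffAt (contDiffAt_dilEnergy (b := b) hU hp))).neg.fderiv
  change fderiv ℝ (commFluxTime b U) p = _ at h
  rw [h]
  simp [timeDir]
  ring

/-- The divergence of the flux behind the commutator identity. -/
theorem div_commFlux (hU : ContDiff ℝ (⊤ : ℕ∞) U) (hp : 0 < p.2) :
    ∑ i, fderiv ℝ (commFlux b U i) p (spaceDir i) +
        fderiv ℝ (commFluxTime b U) p (timeDir n) =
      carlemanWeight b p * (2 * skewPart b U p *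
        (p.2 * (fderiv ℝ U p (timeDir n) + spaceLap U p) - skewPart b U p) -
          b * p.2 / 3 * U p ^ 2) := by
  have hK := map_dilDir (fderiv ℝ (dilEnergy b U) p) p
  rw [fderiv_dilEnergy_dilDir hU hp] at hK
  have hX := map_dilDir (fderiv ℝ U p) p
  have hS : ∑ i, fderiv ℝ (commFlux b U i) p (spaceDir i) =
      carlemanWeight b p * skewPart b U p *
        (2 * p.2 * spaceLap U p - 2 * ∑ i, p.1 i / 2 * fderiv ℝ U p (spaceDir i)) +
      carlemanWeight b p * p.2 * (∑ i, 2 * (fderiv ℝ U p (spaceDir i) *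
          fderiv ℝ (fun q => fderiv ℝ U q (spaceDir i)) p (dilDir p))) +
      carlemanWeight b p * p.2 * (1 + 2 * skewCoeff n b p.2) * gradSq U p -
      n / 2 * dilEnergy b U p - ∑ i, p.1 i / 2 * fderiv ℝ (dilEnergy b U) p (spaceDir i) := by
    have hn : (n : ℝ) / 2 * dilEnergy b U p = ∑ _i : Fin n, dilEnergy b U p / 2 := by
      simp; ring
    rw [hn]
    simp only [spaceLap, gradSq, Finset.mul_sum, ← Finset.sum_sub_distrib, ← Finset.sum_add_distrib]
    refine Finset.sum_congr rfl fun i _ => ?_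
    rw [fderiv_commFlux hU hp, fderiv_skewPart_spaceDir hU]
    ring
  rw [hS, fderiv_commFluxTime hU hp]
  generalize (∑ i, p.1 i / 2 * fderiv ℝ (dilEnergy b U) p (spaceDir i)) = s1 at *
  generalize (∑ i, p.1 i / 2 * fderiv ℝ U p (spaceDir i)) = s2 at *
  generalize (∑ i, 2 * (fderiv ℝ U p (spaceDir i) *
          fderiv ℝ (fun q => fderiv ℝ U q (spaceDir i)) p (dilDir p))) = s3 at *
  have hs2 : s2 = fderiv ℝ U p (dilDir p) - p.2 * fderiv ℝ U p (timeDir n) := by linarith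
  rw [hs2]
  have hs1 : s1 = _ - p.2 * fderiv ℝ (dilEnergy b U) p (timeDir n) := eq_sub_of_add_eq hK.symm
  rw [hs1]
  simp only [skewPart, dilEnergy, skewCoeff]
  ring

theorem fderiv_energyFlux (hU : ContDiff ℝ (⊤ : ℕ∞) U) (hp : 0 < p.2) (i : Fin n) :
    fderiv ℝ (energyFlux b U i) p (spaceDir i) =
      carlemanWeight b p * (p.2 ^ 2 * fderiv ℝ U p (spaceDir i) ^ 2 +
        p.2 ^ 2 * U p * fderiv ℝ (fun q => fderiv ℝ U q (spaceDir i)) p (spaceDir i) +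
        p.2 / 4 * U p ^ 2 - p.1 i ^ 2 / 8 * U p ^ 2) := by
  have h2 : HasFDerivAt (fun q : EuclideanSpace ℝ (Fin n) × ℝ => q.2)
    (ContinuousLinearMap.snd ℝ _ _) p := hasFDerivAt_snd
  have hx : HasFDerivAt (fun q : EuclideanSpace ℝ (Fin n) × ℝ => q.1 i)
    ((EuclideanSpace.proj i : EuclideanSpace ℝ (Fin n) →L[ℝ] ℝ).comp
    (ContinuousLinearMap.fst ℝ _ ℝ)) p :=
    ((EuclideanSpace.proj i : EuclideanSpace ℝ (Fin n) →L[ℝ] ℝ).comp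
      (ContinuousLinearMap.fst ℝ _ ℝ)).hasFDerivAt
  have hU' := hasFDerivAt_of_contDiffAt (p := p) hU.contDiffAt
  have h := ((hasFDerivAt_of_contDiffAt (contDiffAt_carlemanWeight b hp)).mul
    (((h2.pow 2).mul (hU'.mul (hasFDerivAt_of_contDiffAt
      (contDiff_fderiv_apply_const hU (spaceDir i)).contDiffAt))).add
      (((h2.mul hx).mul_const (4⁻¹ : ℝ)).mul (hU'.pow 2)))).fderiv
  have he : energyFlux b U i = fun p => carlemanWeight b p *
      (p.2 ^ 2 * (U p * fderiv ℝ U p (spaceDir i)) + p.2 * p.1 i * 4⁻¹ * U p ^ 2) := by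
    funext q; simp only [energyFlux, div_eq_mul_inv]
  change fderiv ℝ (fun p => carlemanWeight b p *
      (p.2 ^ 2 * (U p * fderiv ℝ U p (spaceDir i)) + p.2 * p.1 i * 4⁻¹ * U p ^ 2)) p = _ at h
  rw [he, h]
  have hs : EuclideanSpace.proj (𝕜 := ℝ) i (spaceDir i).1 = (1 : ℝ) := by simp [spaceDir]
  have hs' : (spaceDir i).2 = (0 : ℝ) := rfl
  simp only [add_apply, smul_apply, smul_eq_mul,
    fderiv_carlemanWeight_spaceDir b hp, ContinuousLinearMap.coe_snd',
    Pi.mul_apply, Pi.add_apply, ContinuousLinearMap.comp_apply,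
    ContinuousLinearMap.coe_fst', hs, hs']
  norm_num
  field_simp
  ring

theorem fderiv_energyFluxTime (hU : ContDiff ℝ (⊤ : ℕ∞) U) (hp : 0 < p.2) :
    fderiv ℝ (energyFluxTime b U) p (timeDir n) =
      carlemanWeight b p * (p.2 * U p ^ 2 + p.2 ^ 2 * U p * fderiv ℝ U p (timeDir n) +
        (‖p.1‖ ^ 2 / 8 - b * (p.2 - p.2 ^ 2 / 3)) * U p ^ 2) := by
  have h2 : HasFDerivAt (fun q : EuclideanSpace ℝ (Fin n) × ℝ => q.2)
    (ContinuousLinearMap.snd ℝ _ _) p := hasFDerivAt_snd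
  have hU' := hasFDerivAt_of_contDiffAt (p := p) hU.contDiffAt
  have h := ((hasFDerivAt_of_contDiffAt (contDiffAt_carlemanWeight b hp)).mul
    (((h2.pow 2).mul_const (2⁻¹ : ℝ)).mul (hU'.pow 2))).fderiv
  have he : energyFluxTime b U = fun p => carlemanWeight b p * (p.2 ^ 2 * 2⁻¹ * U p ^ 2) := by
    funext q; simp only [energyFluxTime, div_eq_mul_inv]
  change fderiv ℝ (fun p => carlemanWeight b p * (p.2 ^ 2 * 2⁻¹ * U p ^ 2)) p = _ at h
  rw [he, h]
  have hs' : (timeDir n).2 = (1 : ℝ) := rfl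
  simp only [add_apply, smul_apply, smul_eq_mul,
    fderiv_carlemanWeight_timeDir b hp, ContinuousLinearMap.coe_snd',
    Pi.mul_apply, hs']
  norm_num
  field_simp
  ring

/-- The divergence of the flux behind the energy identity. -/
theorem div_energyFlux (hU : ContDiff ℝ (⊤ : ℕ∞) U) (hp : 0 < p.2) :
    ∑ i, fderiv ℝ (energyFlux b U i) p (spaceDir i) +
        fderiv ℝ (energyFluxTime b U) p (timeDir n) =
      carlemanWeight b p * (p.2 ^ 2 * gradSq U p +
        p.2 ^ 2 * U p * (fderiv ℝ U p (timeDir n) + spaceLap U p) +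
        ((n / 4 + 1) * p.2 - b * (p.2 - p.2 ^ 2 / 3)) * U p ^ 2) := by
  have hS : ∑ i, fderiv ℝ (energyFlux b U i) p (spaceDir i) =
      carlemanWeight b p * (p.2 ^ 2 * gradSq U p + p.2 ^ 2 * U p * spaceLap U p +
        n * (p.2 / 4 * U p ^ 2) - ‖p.1‖ ^ 2 / 8 * U p ^ 2) := by
    have hn : (n : ℝ) * (p.2 / 4 * U p ^ 2) = ∑ _i : Fin n, p.2 / 4 * U p ^ 2 := by simp
    rw [hn, EuclideanSpace.real_norm_sq_eq]
    simp only [spaceLap, gradSq, Finset.mul_sum, Finset.sum_mul, Finset.sum_div,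
      ← Finset.sum_sub_distrib, ← Finset.sum_add_distrib]
    exact Finset.sum_congr rfl fun i _ => fderiv_energyFlux hU hp i
  rw [hS, fderiv_energyFluxTime hU hp]
  ring

end Derivatives

section Support

variable {n : ℕ} {b : ℝ} {U : EuclideanSpace ℝ (Fin n) × ℝ → ℝ}
  {p : EuclideanSpace ℝ (Fin n) × ℝ}

theorem gradSq_of_notMem_tsupport (hp : p ∉ tsupport U) : gradSq U p = 0 := by
  simp [gradSq, fderiv_of_notMem_tsupport ℝ hp]

theorem spaceLap_of_notMem_tsupport (hp : p ∉ tsupport U) : spaceLap U p = 0 := by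
  refine Finset.sum_eq_zero fun i _ => ?_
  rw [fderiv_of_notMem_tsupport ℝ (fun h => hp (tsupport_fderiv_apply_subset ℝ _ h))]
  rfl

theorem commFlux_of_notMem_tsupport (hp : p ∉ tsupport U) (i : Fin n) : commFlux b U i p = 0 := by
  simp [commFlux, dilEnergy, gradSq_of_notMem_tsupport hp, image_eq_zero_of_notMem_tsupport hp,
    fderiv_of_notMem_tsupport ℝ hp]

theorem commFluxTime_of_notMem_tsupport (hp : p ∉ tsupport U) : commFluxTime b U p = 0 := by
  simp [commFluxTime, dilEnergy, gradSq_of_notMem_tsupport hp, image_eq_zero_of_notMem_tsupport hp]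

theorem energyFlux_of_notMem_tsupport (hp : p ∉ tsupport U) (i : Fin n) :
    energyFlux b U i p = 0 := by
  simp [energyFlux, image_eq_zero_of_notMem_tsupport hp]

theorem energyFluxTime_of_notMem_tsupport (hp : p ∉ tsupport U) : energyFluxTime b U p = 0 := by
  simp [energyFluxTime, image_eq_zero_of_notMem_tsupport hp]

theorem tsupport_subset_of_eq_zero {F : EuclideanSpace ℝ (Fin n) × ℝ → ℝ}
    (h0 : ∀ p ∉ tsupport U, F p = 0) : tsupport F ⊆ tsupport U :=
  closure_minimal (fun p hp => by_contra fun h => hp (h0 p h)) (isClosed_tsupport U)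

theorem contDiff_and_hasCompactSupport_of_eq_zero {F : EuclideanSpace ℝ (Fin n) × ℝ → ℝ}
    (hc : HasCompactSupport U) (hpos : ∀ p ∈ tsupport U, 0 < p.2)
    (hF : ∀ p, 0 < p.2 → ContDiffAt ℝ (⊤ : ℕ∞) F p) (h0 : ∀ p ∉ tsupport U, F p = 0) :
    ContDiff ℝ (⊤ : ℕ∞) F ∧ HasCompactSupport F := by
  refine ⟨contDiff_iff_contDiffAt.2 fun p => ?_,
    hc.of_isClosed_subset (isClosed_tsupport F) (tsupport_subset_of_eq_zero h0)⟩
  by_cases hp : p ∈ tsupport F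
  · exact hF p (hpos p (tsupport_subset_of_eq_zero h0 hp))
  · exact contDiffAt_const.congr_of_eventuallyEq (notMem_tsupport_iff_eventuallyEq.1 hp)

theorem integrable_of_eq_zero {F : EuclideanSpace ℝ (Fin n) × ℝ → ℝ}
    (hc : HasCompactSupport U) (hpos : ∀ p ∈ tsupport U, 0 < p.2)
    (hF : ∀ p, 0 < p.2 → ContDiffAt ℝ (⊤ : ℕ∞) F p) (h0 : ∀ p ∉ tsupport U, F p = 0) :
    Integrable F :=
  have h := contDiff_and_hasCompactSupport_of_eq_zero hc hpos hF h0
  h.1.continuous.integrable_of_hasCompactSupport h.2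

theorem integral_div_eq_zero {F : Fin n → EuclideanSpace ℝ (Fin n) × ℝ → ℝ}
    {G : EuclideanSpace ℝ (Fin n) × ℝ → ℝ}
    (hc : HasCompactSupport U) (hpos : ∀ p ∈ tsupport U, 0 < p.2)
    (hF : ∀ i p, 0 < p.2 → ContDiffAt ℝ (⊤ : ℕ∞) (F i) p) (hF0 : ∀ i, ∀ p ∉ tsupport U, F i p = 0)
    (hG : ∀ p, 0 < p.2 → ContDiffAt ℝ (⊤ : ℕ∞) G p) (hG0 : ∀ p ∉ tsupport U, G p = 0) :
    Integrable (fun p => ∑ i, fderiv ℝ (F i) p (spaceDir i) + fderiv ℝ G p (timeDir n)) ∧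
      ∫ p, (∑ i, fderiv ℝ (F i) p (spaceDir i) + fderiv ℝ G p (timeDir n)) = 0 := by
  have hFi := fun i => contDiff_and_hasCompactSupport_of_eq_zero hc hpos (hF i) (hF0 i)
  have hG' := contDiff_and_hasCompactSupport_of_eq_zero hc hpos hG hG0
  have h1 := fun i => integral_fderiv_apply_eq_zero ((hFi i).1.of_le (by simp)) (hFi i).2
    (spaceDir i)
  have h2 := integral_fderiv_apply_eq_zero (hG'.1.of_le (by simp)) hG'.2 (timeDir n)
  have hs := integrable_finsetSum Finset.univ fun i _ => (h1 i).1
  refine ⟨hs.add h2.1, ?_⟩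
  rw [integral_add hs h2.1, integral_finsetSum _ fun i _ => (h1 i).1, h2.2,
    Finset.sum_eq_zero fun i _ => (h1 i).2, add_zero]

theorem setIntegral_integral_eq_integral {F : EuclideanSpace ℝ (Fin n) × ℝ → ℝ}
    (hF : Integrable F) {s : Set ℝ} (h0 : ∀ p, p.2 ∉ s → F p = 0) :
    ∫ t in s, ∫ x, F (x, t) = ∫ p, F p := by
  rw [setIntegral_eq_integral_of_forall_compl_eq_zero fun t ht => by
    simp [h0 (_, t) ht]]
  exact (integral_prod_symm F hF).symm

end Support

theorem carlemanWeight_eq {n : ℕ} (a : ℝ) (x : EuclideanSpace ℝ (Fin n)) {t : ℝ} (ht : 0 < t) :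
    carlemanWeight a (x, t) = hfun t ^ (-(2 * a)) * Real.exp (-‖x‖ ^ 2 / (4 * t)) := by
  rw [hfun, Real.rpow_def_of_pos (by positivity), Real.log_mul ht.ne' (Real.exp_pos _).ne',
    Real.log_exp, ← Real.exp_add, carlemanWeight]
  congr 1
  ring

theorem carlemanWeight_add_one {n : ℕ} (a : ℝ) {p : EuclideanSpace ℝ (Fin n) × ℝ}
    (hp : 0 < p.2) :
    carlemanWeight a p =
      carlemanWeight (a + 1) p * p.2 ^ 2 * Real.exp (2 * (1 - p.2) / 3) := by
  have h : p.2 ^ 2 = Real.exp (2 * Real.log p.2) := by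
    rw [two_mul, Real.exp_add, Real.exp_log hp, sq]
  rw [h, carlemanWeight, carlemanWeight, ← Real.exp_add, ← Real.exp_add]
  congr 1
  ring

/-- The pointwise form of the Carleman inequality: it holds up to divergences. -/
theorem carleman_pointwise {n : ℕ} {a : ℝ} (ha : 0 < a) {U : EuclideanSpace ℝ (Fin n) × ℝ → ℝ}
    (hU : ContDiff ℝ (⊤ : ℕ∞) U) {p : EuclideanSpace ℝ (Fin n) × ℝ} (hp : 0 < p.2)
    (hp2 : p.2 < 2) :
    carlemanWeight a p * (a / p.2 * U p ^ 2 + gradSq U p) ≤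
      Real.exp (2 / 3) * ((∑ i, fderiv ℝ (energyFlux (a + 1) U i) p (spaceDir i) +
        fderiv ℝ (energyFluxTime (a + 1) U) p (timeDir n)) -
        6 * (∑ i, fderiv ℝ (commFlux (a + 1) U i) p (spaceDir i) +
        fderiv ℝ (commFluxTime (a + 1) U) p (timeDir n))) +
      7 / 2 * Real.exp (4 / 3) * (carlemanWeight a p *
        (fderiv ℝ U p (timeDir n) + spaceLap U p) ^ 2) := by
  rw [div_energyFlux hU hp, div_commFlux hU hp, carlemanWeight_add_one a hp]
  have hN : 0 ≤ gradSq U p := Finset.sum_nonneg fun _ _ => sq_nonneg _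
  have hω : 0 < carlemanWeight (a + 1) p := Real.exp_pos _
  have hκ : Real.exp (2 * (1 - p.2) / 3) ≤ Real.exp (2 / 3) := Real.exp_le_exp.2 (by linarith)
  have hκ' : 1 ≤ Real.exp (2 / 3) * Real.exp (2 * (1 - p.2) / 3) := by
    rw [← Real.exp_add]
    exact Real.one_le_exp (by linarith)
  have h43 : Real.exp (4 / 3) = Real.exp (2 / 3) * Real.exp (2 / 3) := by
    rw [← Real.exp_add]; norm_num
  rw [h43]
  have hE : 0 < Real.exp (2 / 3) := Real.exp_pos _
  generalize Real.exp (2 / 3) = E at *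
  generalize Real.exp (2 * (1 - p.2) / 3) = κ at *
  generalize carlemanWeight (a + 1) p = ω at *
  generalize gradSq U p = N at *
  generalize fderiv ℝ U p (timeDir n) + spaceLap U p = P at *
  generalize skewPart (a + 1) U p = Y at *
  generalize U p = u at *
  generalize p.2 = t at *
  have hcore : (a + 1) * t * u ^ 2 + t ^ 2 * N ≤
      (t ^ 2 * N + t ^ 2 * u * P + ((n / 4 + 1) * t - (a + 1) * (t - t ^ 2 / 3)) * u ^ 2) -
      6 * (2 * Y * (t * P - Y) - (a + 1) * t / 3 * u ^ 2) + 7 / 2 * (t ^ 2 * P ^ 2) := by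
    have h1 := sq_nonneg (t * P - 2 * Y)
    have h2 : 0 ≤ t ^ 2 * (P + u) ^ 2 := by positivity
    have h3 : 0 ≤ (n : ℝ) / 4 * t * u ^ 2 := by positivity
    have h4 : 0 ≤ (a + 1) * (t ^ 2 / 3) * u ^ 2 := by positivity
    have h5 : 0 ≤ t * (2 - t) * u ^ 2 :=
      mul_nonneg (mul_nonneg hp.le (by linarith)) (sq_nonneg u)
    linarith
  calc ω * t ^ 2 * κ * (a / t * u ^ 2 + N)
      = κ * (ω * (a * t * u ^ 2 + t ^ 2 * N)) := by field_simp
    _ ≤ E * (ω * ((a + 1) * t * u ^ 2 + t ^ 2 * N)) := by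
        gcongr
        linarith
    _ ≤ E * (ω * ((t ^ 2 * N + t ^ 2 * u * P +
          ((n / 4 + 1) * t - (a + 1) * (t - t ^ 2 / 3)) * u ^ 2) -
          6 * (2 * Y * (t * P - Y) - (a + 1) * t / 3 * u ^ 2) + 7 / 2 * (t ^ 2 * P ^ 2))) := by
        gcongr
    _ = E * (ω * (t ^ 2 * N + t ^ 2 * u * P +
          ((n / 4 + 1) * t - (a + 1) * (t - t ^ 2 / 3)) * u ^ 2) -
          6 * (ω * (2 * Y * (t * P - Y) - (a + 1) * t / 3 * u ^ 2))) +
          7 / 2 * E * (ω * t ^ 2 * P ^ 2) * 1 := by ring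
    _ ≤ E * (ω * (t ^ 2 * N + t ^ 2 * u * P +
          ((n / 4 + 1) * t - (a + 1) * (t - t ^ 2 / 3)) * u ^ 2) -
          6 * (ω * (2 * Y * (t * P - Y) - (a + 1) * t / 3 * u ^ 2))) +
          7 / 2 * E * (ω * t ^ 2 * P ^ 2) * (E * κ) := by
        gcongr
    _ = _ := by ring

theorem carleman_spacetime {n : ℕ} {a : ℝ} (ha : 0 < a) {U : EuclideanSpace ℝ (Fin n) × ℝ → ℝ}
    (hU : ContDiff ℝ (⊤ : ℕ∞) U) (hc : HasCompactSupport U)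
    (hs : tsupport U ⊆ Set.univ ×ˢ Set.Ioo (0 : ℝ) 2) :
    ∫ t in Set.Ioo (0 : ℝ) 2, ∫ x, carlemanWeight a (x, t) *
        (a / t * U (x, t) ^ 2 + gradSq U (x, t)) ≤
      7 / 2 * Real.exp (4 / 3) * ∫ t in Set.Ioo (0 : ℝ) 2, ∫ x, carlemanWeight a (x, t) *
        (fderiv ℝ U (x, t) (timeDir n) + spaceLap U (x, t)) ^ 2 := by
  have hpos : ∀ p ∈ tsupport U, 0 < p.2 := fun p hp => (hs hp).2.1
  have hzero : ∀ p : EuclideanSpace ℝ (Fin n) × ℝ, p.2 ∉ Set.Ioo (0 : ℝ) 2 → p ∉ tsupport U :=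
    fun p hp h => hp (hs h).2
  set L : EuclideanSpace ℝ (Fin n) × ℝ → ℝ := fun p =>
    carlemanWeight a p * (a / p.2 * U p ^ 2 + gradSq U p) with hL
  set R : EuclideanSpace ℝ (Fin n) × ℝ → ℝ := fun p =>
    carlemanWeight a p * (fderiv ℝ U p (timeDir n) + spaceLap U p) ^ 2 with hR
  have hL0 : ∀ p ∉ tsupport U, L p = 0 := fun p hp => by
    simp [hL, gradSq_of_notMem_tsupport hp, image_eq_zero_of_notMem_tsupport hp]
  have hR0 : ∀ p ∉ tsupport U, R p = 0 := fun p hp => by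
    simp [hR, spaceLap_of_notMem_tsupport hp, fderiv_of_notMem_tsupport ℝ hp]
  have hLi : Integrable L := integrable_of_eq_zero hc hpos (fun p hp =>
    (contDiffAt_carlemanWeight a hp).mul (((contDiffAt_const.div contDiffAt_snd hp.ne').mul
      (hU.pow 2).contDiffAt).add (contDiff_gradSq hU).contDiffAt)) hL0
  have hRi : Integrable R := integrable_of_eq_zero hc hpos (fun p hp =>
    (contDiffAt_carlemanWeight a hp).mul
      (((contDiff_fderiv_apply_const hU _).add (contDiff_spaceLap hU)).pow 2).contDiffAt) hR0
  obtain ⟨hGi, hG⟩ := integral_div_eq_zero hc hpos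
    (fun i p hp => contDiffAt_energyFlux (b := a + 1) hU hp i)
    (fun i p hp => energyFlux_of_notMem_tsupport hp i)
    (fun p hp => contDiffAt_energyFluxTime (b := a + 1) hU hp)
    (fun p hp => energyFluxTime_of_notMem_tsupport hp)
  obtain ⟨hCi, hC⟩ := integral_div_eq_zero hc hpos
    (fun i p hp => contDiffAt_commFlux (b := a + 1) hU hp i)
    (fun i p hp => commFlux_of_notMem_tsupport hp i)
    (fun p hp => contDiffAt_commFluxTime (b := a + 1) hU hp)
    (fun p hp => commFluxTime_of_notMem_tsupport hp)
  have hCi6 := hCi.const_mul 6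
  have hdiff : Integrable fun p => Real.exp (2 / 3) *
      ((∑ i, fderiv ℝ (energyFlux (a + 1) U i) p (spaceDir i) +
        fderiv ℝ (energyFluxTime (a + 1) U) p (timeDir n)) -
        6 * (∑ i, fderiv ℝ (commFlux (a + 1) U i) p (spaceDir i) +
        fderiv ℝ (commFluxTime (a + 1) U) p (timeDir n))) :=
    (hGi.sub hCi6).const_mul _
  have hRc := hRi.const_mul (7 / 2 * Real.exp (4 / 3))
  have hmono : ∫ p, L p ≤ ∫ p, (Real.exp (2 / 3) *
      ((∑ i, fderiv ℝ (energyFlux (a + 1) U i) p (spaceDir i) +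
        fderiv ℝ (energyFluxTime (a + 1) U) p (timeDir n)) -
        6 * (∑ i, fderiv ℝ (commFlux (a + 1) U i) p (spaceDir i) +
        fderiv ℝ (commFluxTime (a + 1) U) p (timeDir n))) +
      7 / 2 * Real.exp (4 / 3) * R p) := by
    refine integral_mono hLi (hdiff.add hRc) fun p => ?_
    by_cases hp : p ∈ tsupport U
    · exact carleman_pointwise ha hU (hs hp).2.1 (hs hp).2.2
    · have h1 : ∀ F : EuclideanSpace ℝ (Fin n) × ℝ → ℝ, (∀ q ∉ tsupport U, F q = 0) →
          fderiv ℝ F p = 0 := fun F hF =>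
        fderiv_of_notMem_tsupport ℝ fun h => hp (tsupport_subset_of_eq_zero hF h)
      have hE : ∀ i, fderiv ℝ (energyFlux (a + 1) U i) p = 0 := fun i =>
        h1 _ fun q hq => energyFlux_of_notMem_tsupport hq i
      have hF : ∀ i, fderiv ℝ (commFlux (a + 1) U i) p = 0 := fun i =>
        h1 _ fun q hq => commFlux_of_notMem_tsupport hq i
      simp [hL0 p hp, hR0 p hp, h1 _ fun q hq => energyFluxTime_of_notMem_tsupport hq,
        h1 _ fun q hq => commFluxTime_of_notMem_tsupport hq, hE, hF]
  rw [setIntegral_integral_eq_integral hLi fun p hp => hL0 p (hzero p hp),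
    setIntegral_integral_eq_integral hRi fun p hp => hR0 p (hzero p hp)]
  refine hmono.trans_eq ?_
  rw [integral_add hdiff hRc, integral_const_mul, integral_sub hGi hCi6,
    integral_const_mul, hG, hC, integral_const_mul]
  ring

section Slices

variable {n : ℕ} {U : EuclideanSpace ℝ (Fin n) × ℝ → ℝ}

theorem fderiv_slice (hU : ContDiff ℝ (⊤ : ℕ∞) U) (x v : EuclideanSpace ℝ (Fin n)) (t : ℝ) :
    fderiv ℝ (fun y => U (y, t)) x v = fderiv ℝ U (x, t) (v, 0) := by
  have h : HasFDerivAt (fun y => U (y, t)) _ x := HasFDerivAt.comp (f := fun y => (y, t)) x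
    (hasFDerivAt_of_contDiffAt hU.contDiffAt) (hasFDerivAt_prodMk_left x t)
  rw [h.fderiv]
  simp

theorem deriv_slice (hU : ContDiff ℝ (⊤ : ℕ∞) U) (x : EuclideanSpace ℝ (Fin n)) (t : ℝ) :
    deriv (fun s => U (x, s)) t = fderiv ℝ U (x, t) (timeDir n) := by
  have h : HasFDerivAt (fun s => U (x, s)) _ t := HasFDerivAt.comp (f := fun s => (x, s)) t
    (hasFDerivAt_of_contDiffAt hU.contDiffAt) (hasFDerivAt_prodMk_right x t)
  rw [h.hasDerivAt.deriv]
  simp [timeDir]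

theorem lap_slice (hU : ContDiff ℝ (⊤ : ℕ∞) U) (x : EuclideanSpace ℝ (Fin n)) (t : ℝ) :
    lap (fun y => U (y, t)) x = spaceLap U (x, t) := by
  refine Finset.sum_congr rfl fun i _ => ?_
  simp only [fderiv_slice hU]
  exact fderiv_slice (contDiff_fderiv_apply_const hU (spaceDir i)) x _ t

theorem norm_gradient_slice_sq (hU : ContDiff ℝ (⊤ : ℕ∞) U) (x : EuclideanSpace ℝ (Fin n))
    (t : ℝ) : ‖gradient (fun y => U (y, t)) x‖ ^ 2 = gradSq U (x, t) := by
  rw [EuclideanSpace.real_norm_sq_eq]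
  refine Finset.sum_congr rfl fun i _ => ?_
  congr 1
  rw [spaceDir, ← fderiv_slice hU, ← toDual_gradient, InnerProductSpace.toDual_apply_apply,
    EuclideanSpace.inner_single_right]
  simp

end Slices

/-- The Carleman inequality of Escauriaza–Seregin–Šverák: for an absolute constant
`c₀ > 0`, every `a > 0` and every smooth compactly supported
`u : ℝⁿ × (0,2) → ℝ`,
`∫∫ h(t)^{-2a} e^{-|x|²/4t} ((a/t) u² + |∇u|²) ≤ c₀ ∫∫ h(t)^{-2a} e^{-|x|²/4t} |∂ₜu + Δu|²`. -/
theorem carleman_ESS :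
    ∃ c₀ : ℝ, 0 < c₀ ∧
      ∀ n : ℕ, 1 ≤ n → ∀ a : ℝ, 0 < a →
        ∀ u : EuclideanSpace ℝ (Fin n) → ℝ → ℝ,
          ContDiff ℝ (⊤ : ℕ∞) (fun p : EuclideanSpace ℝ (Fin n) × ℝ => u p.1 p.2) →
          HasCompactSupport (fun p : EuclideanSpace ℝ (Fin n) × ℝ => u p.1 p.2) →
          tsupport (fun p : EuclideanSpace ℝ (Fin n) × ℝ => u p.1 p.2) ⊆
            Set.univ ×ˢ Set.Ioo (0 : ℝ) 2 →
          (∫ t in Set.Ioo (0 : ℝ) 2, ∫ x : EuclideanSpace ℝ (Fin n),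
              hfun t ^ (-(2 * a)) * Real.exp (-‖x‖ ^ 2 / (4 * t)) *
                ((a / t) * (u x t) ^ 2 + ‖gradient (fun y => u y t) x‖ ^ 2))
            ≤ c₀ * ∫ t in Set.Ioo (0 : ℝ) 2, ∫ x : EuclideanSpace ℝ (Fin n),
              hfun t ^ (-(2 * a)) * Real.exp (-‖x‖ ^ 2 / (4 * t)) *
                |deriv (u x) t + lap (fun y => u y t) x| ^ 2 := by
  refine ⟨7 / 2 * Real.exp (4 / 3), by positivity, fun n _ a ha u hU hc hs => ?_⟩
  refine le_of_eq_of_le ?_ ((carleman_spacetime ha hU hc hs).trans_eq ?_)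
  · refine setIntegral_congr_fun measurableSet_Ioo fun t ht => ?_
    refine integral_congr_ae (Eventually.of_forall fun x => ?_)
    simp only [carlemanWeight_eq a x ht.1, ← norm_gradient_slice_sq hU]
  · congr 1
    refine setIntegral_congr_fun measurableSet_Ioo fun t ht => ?_
    refine integral_congr_ae (Eventually.of_forall fun x => ?_)
    simp only [carlemanWeight_eq a x ht.1, ← lap_slice hU, ← deriv_slice hU, sq_abs]
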